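/- arXiv:2108.10595 — 4 statements merged into one kernel-verified Lean document; each statement's English description precedes it below -/
import Mathlib

section
/- Validity of the GKnockoff construction: let X* ∈ ℝ^{n×m} have positive definite Gram matrix Σ* = X*ᵀX*, let s ∈ ℝ^m, let Ũ ∈ ℝ^{n×m} satisfy X*ᵀ Ũ = 0 and ŨᵀŨ = I_m, and let C ∈ ℝ^{m×m} satisfy CᵀC = 2·diag(s) − diag(s)·Σ*⁻¹·diag(s). Then the matrix X̃ = X*( I_m − Σ*⁻¹ diag(s) ) + Ũ C satisfies X̃ᵀX̃ = Σ* and X*ᵀX̃ = Σ* − diag(s); that is, X̃ is a GKnockoff of X* with gap vector s. -/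
open Matrix

/-!
Write `Y = X (1 - B D) + U C` with `B = (Xᴴ X)⁻¹`. Since the columns of `U` are orthogonal to those
of `X`, the cross products `Xᴴ Y` see only the first summand, and by Pythagoras the Gram matrix of
`Y` is the sum of those of its summands. The first of these falls short of `Xᴴ X` by exactly
`2 D - D B D`, and the second, `Cᴴ C`, makes up the deficit.

The role of `(Xᴴ X)⁻¹` can be played by any Hermitian `B` with `Xᴴ X B D = D`, such as a Hermitian
generalized inverse of a singular `Xᴴ X` whose range contains the columns of `D`.
-/

section Ring

variable {A : Type*} [Ring A]

theorem mul_one_sub_mul_of_mul_mul_eq {g b d : A} (hgbd : g * b * d = d) :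
    g * (1 - b * d) = g - d := by
  rw [mul_sub, mul_one, ← mul_assoc, hgbd]

theorem star_one_sub_mul_mul_one_sub_mul [StarRing A] {g b d : A} (hg : IsSelfAdjoint g)
    (hb : IsSelfAdjoint b) (hd : IsSelfAdjoint d) (hgbd : g * b * d = d) :
    star (1 - b * d) * g * (1 - b * d) = g - (2 * d - d * b * d) := by
  have hdbg : d * b * g = d := by
    simpa only [star_mul, hg.star_eq, hb.star_eq, hd.star_eq, mul_assoc] using congrArg star hgbd
  calc star (1 - b * d) * g * (1 - b * d)
      = (1 - d * b) * (g - d) := by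
        rw [mul_assoc, mul_one_sub_mul_of_mul_mul_eq hgbd, star_sub, star_one, star_mul,
          hb.star_eq, hd.star_eq]
    _ = g - d - (d - d * b * d) := by rw [sub_mul, one_mul, mul_sub, hdbg]
    _ = g - (2 * d - d * b * d) := by rw [two_mul]; abel

end Ring

section Gram

variable {R n m p : Type*} [Ring R] [StarRing R] [Fintype n]

theorem gram_add_of_conjTranspose_mul_eq_zero {V W : Matrix n m R} (h : Vᴴ * W = 0) :
    (V + W)ᴴ * (V + W) = Vᴴ * V + Wᴴ * W := by
  have h' : Wᴴ * V = 0 := by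
    simpa only [conjTranspose_mul, conjTranspose_conjTranspose, conjTranspose_zero]
      using congrArg conjTranspose h
  rw [conjTranspose_add, Matrix.add_mul, Matrix.mul_add, Matrix.mul_add, h, h', add_zero, zero_add]

theorem gram_mul_of_gram_eq_one [Fintype p] [DecidableEq p] {U : Matrix n p R} (hU : Uᴴ * U = 1)
    (C : Matrix p m R) : (U * C)ᴴ * (U * C) = Cᴴ * C := by
  rw [conjTranspose_mul, Matrix.mul_assoc, ← Matrix.mul_assoc Uᴴ, hU, Matrix.one_mul]

/-- `Y` is a GKnockoff of `X` with gap matrix `D`. A gap vector `s` corresponds to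
`D = diagonal s`; over `ℝ` the conjugate transpose is the transpose. -/
structure IsGKnockoff (X Y : Matrix n m R) (D : Matrix m m R) : Prop where
  gram_eq : Yᴴ * Y = Xᴴ * X
  cross_eq : Xᴴ * Y = Xᴴ * X - D

theorem gknockoff_construction_valid_general [Fintype m] [DecidableEq m] [Fintype p]
    [DecidableEq p] {X : Matrix n m R} {B D : Matrix m m R} {U : Matrix n p R} {C : Matrix p m R}
    (hB : B.IsHermitian) (hD : D.IsHermitian) (hXBD : Xᴴ * X * B * D = D)
    (hXU : Xᴴ * U = 0) (hUU : Uᴴ * U = 1) (hC : Cᴴ * C = (2 : R) • D - D * B * D) :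
    IsGKnockoff X (X * (1 - B * D) + U * C) D where
  gram_eq := by
    have horth : (X * (1 - B * D))ᴴ * (U * C) = 0 := by
      rw [conjTranspose_mul, Matrix.mul_assoc, ← Matrix.mul_assoc Xᴴ, hXU, Matrix.zero_mul,
        Matrix.mul_zero]
    have hgram : (X * (1 - B * D))ᴴ * (X * (1 - B * D)) = Xᴴ * X - (2 * D - D * B * D) := by
      rw [← star_one_sub_mul_mul_one_sub_mul (isHermitian_conjTranspose_mul_self X) hB hD hXBD]
      simp only [star_eq_conjTranspose, conjTranspose_mul, Matrix.mul_assoc]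
    rw [gram_add_of_conjTranspose_mul_eq_zero horth, gram_mul_of_gram_eq_one hUU, hgram, hC,
      two_smul, ← two_mul, sub_add_cancel]
  cross_eq := by
    rw [Matrix.mul_add, ← Matrix.mul_assoc, ← Matrix.mul_assoc, hXU, Matrix.zero_mul, add_zero,
      mul_one_sub_mul_of_mul_mul_eq hXBD]

end Gram

/-- Validity of the GKnockoff construction. -/
theorem gknockoff_construction_valid {n m : ℕ}
    (Xstar : Matrix (Fin n) (Fin m) ℝ)
    (hpd : (Xstarᵀ * Xstar).PosDef)
    (s : Fin m → ℝ)
    (U : Matrix (Fin n) (Fin m) ℝ)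
    (hUorth : Xstarᵀ * U = 0) (hUU : Uᵀ * U = 1)
    (C : Matrix (Fin m) (Fin m) ℝ)
    (hC : Cᵀ * C = (2 : ℝ) • Matrix.diagonal s -
      Matrix.diagonal s * (Xstarᵀ * Xstar)⁻¹ * Matrix.diagonal s) :
    (Xstar * (1 - (Xstarᵀ * Xstar)⁻¹ * Matrix.diagonal s) + U * C)ᵀ *
        (Xstar * (1 - (Xstarᵀ * Xstar)⁻¹ * Matrix.diagonal s) + U * C) = Xstarᵀ * Xstar ∧
      Xstarᵀ * (Xstar * (1 - (Xstarᵀ * Xstar)⁻¹ * Matrix.diagonal s) + U * C) =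
        Xstarᵀ * Xstar - Matrix.diagonal s := by
  have h := gknockoff_construction_valid_general (X := Xstar) hpd.isHermitian.inv
    (isHermitian_diagonal s) (by simp [mul_nonsing_inv _ hpd.det_pos.ne'.isUnit]) hUorth hUU hC
  exact ⟨h.gram_eq, h.cross_eq⟩
end

section
/- Sure screening property of FuSIS: let S ⊆ {h,…,p−h} be the active set with J = |S|. Assume: (i) for every j ∈ S and every ε ∈ (0,1), P( |D̂(j,h) − D(j,h)| ≥ ε ) ≤ h·c₁·exp(−c₂ n ε²) for constants c₁, c₂ > 0; (ii) min_{j∈S} D(j,h) ≥ 2 c₃ n^{−κ} for constants c₃ > 0 and 0 ≤ κ ≤ 1/2, with c₃ n^{−κ} < 1. Then for every threshold ϑ with 0 < ϑ ≤ min_{j∈S} D(j,h) / 2, the screened set Â(ϑ) = {j : D̂(j,h) ≥ ϑ} satisfies P( S ⊆ Â(ϑ) ) ≥ 1 − J·h·c₁·exp(−c₂ c₃² n^{1−2κ}). -/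
open MeasureTheory Finset

/-!
With `ε = c₃ n ^ (-κ)`, every active index has signal at least `2 ε`, and the threshold is at most
half of that signal. Hence an active index can only be missed if its statistic deviates from its
target by at least `ε`. The deviation inequality at this `ε` and a union bound over the active set
control the probability of missing any of them, and `n ε ^ 2 = c₃ ^ 2 n ^ (1 - 2 κ)`.
-/

section Screening

variable {Ω ι : Type*} [MeasurableSpace Ω] {S : Finset ι} {That : ι → Ω → ℝ} {T : ι → ℝ}

theorem measure_univ_sub_sum_compl_le_measure_biInter (P : Measure Ω) (s : Finset ι)
    (A : ι → Set Ω) : P Set.univ - ∑ j ∈ s, P (A j)ᶜ ≤ P (⋂ j ∈ s, A j) := by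
  rw [tsub_le_iff_right]
  calc P Set.univ
      ≤ P (⋂ j ∈ s, A j) + P (⋂ j ∈ s, A j)ᶜ := measure_univ_le_add_compl _
    _ = P (⋂ j ∈ s, A j) + P (⋃ j ∈ s, (A j)ᶜ) := by rw [Set.compl_iInter₂]
    _ ≤ P (⋂ j ∈ s, A j) + ∑ j ∈ s, P (A j)ᶜ := by
      gcongr
      exact measure_biUnion_finset_le s _

theorem le_abs_sub_of_lt_of_le_half {K : Type*} [Field K] [LinearOrder K] [IsStrictOrderedRing K]
    {x t ϑ ε : K} (hx : x < ϑ) (hϑ : ϑ ≤ t / 2) (hε : 2 * ε ≤ t) : ε ≤ |x - t| :=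
  calc ε ≤ t - x := by linarith
    _ ≤ |t - x| := le_abs_self _
    _ = |x - t| := abs_sub_comm t x

theorem measure_univ_sub_card_mul_le_measure_forall_threshold_le {P : Measure Ω} {ϑ ε : ℝ}
    {β : ENNReal} (hdev : ∀ j ∈ S, P {ω | ε ≤ |That j ω - T j|} ≤ β)
    (hsig : ∀ j ∈ S, 2 * ε ≤ T j) (hϑ : ∀ j ∈ S, ϑ ≤ T j / 2) :
    P Set.univ - #S * β ≤ P {ω | ∀ j ∈ S, ϑ ≤ That j ω} := by
  have hmiss : ∀ j ∈ S, P {ω | ϑ ≤ That j ω}ᶜ ≤ β := fun j hj =>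
    calc P {ω | ϑ ≤ That j ω}ᶜ
        ≤ P {ω | ε ≤ |That j ω - T j|} := measure_mono fun ω (hω : ¬ϑ ≤ That j ω) =>
          le_abs_sub_of_lt_of_le_half (not_le.mp hω) (hϑ j hj) (hsig j hj)
      _ ≤ β := hdev j hj
  calc P Set.univ - #S * β
      ≤ P Set.univ - ∑ j ∈ S, P {ω | ϑ ≤ That j ω}ᶜ := by
        gcongr
        simpa only [nsmul_eq_mul] using sum_le_card_nsmul S _ β hmiss
    _ ≤ P (⋂ j ∈ S, {ω | ϑ ≤ That j ω}) := measure_univ_sub_sum_compl_le_measure_biInter P S _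
    _ = P {ω | ∀ j ∈ S, ϑ ≤ That j ω} := by simp only [Set.ofPred_forall]

theorem ofReal_one_sub_natCast_mul (k : ℕ) {b : ℝ} (hb : 0 ≤ b) :
    ENNReal.ofReal (1 - k * b) = 1 - k * ENNReal.ofReal b := by
  rw [ENNReal.ofReal_sub 1 (by positivity), ENNReal.ofReal_one,
    ENNReal.ofReal_mul k.cast_nonneg, ENNReal.ofReal_natCast]

theorem mul_mul_rpow_neg_sq {x : ℝ} (hx : 0 < x) (c κ : ℝ) :
    x * (c * x ^ (-κ)) ^ 2 = c ^ 2 * x ^ (1 - 2 * κ) := by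
  have hpow : x ^ (1 - 2 * κ) = x * (x ^ (-κ)) ^ 2 := by
    rw [← Real.rpow_mul_natCast hx.le, sub_eq_add_neg, Real.rpow_add hx, Real.rpow_one]
    congr 2
    push_cast
    ring
  rw [hpow]
  ring

theorem fusis_sure_screening_general {P : Measure Ω} [IsProbabilityMeasure P]
    {n C c₂ c₃ κ ϑ : ℝ} (hn : 0 < n) (hC : 0 ≤ C) (hc₃ : 0 < c₃)
    (hdev : ∀ j ∈ S, ∀ ε ∈ Set.Ioo (0 : ℝ) 1,
      P {ω | ε ≤ |That j ω - T j|} ≤ ENNReal.ofReal (C * Real.exp (-(c₂ * n * ε ^ 2))))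
    (hsig : ∀ j ∈ S, 2 * c₃ * n ^ (-κ) ≤ T j) (hsmall : c₃ * n ^ (-κ) < 1)
    (hϑ : ∀ j ∈ S, ϑ ≤ T j / 2) :
    ENNReal.ofReal (1 - #S * (C * Real.exp (-(c₂ * c₃ ^ 2 * n ^ (1 - 2 * κ))))) ≤
      P {ω | ∀ j ∈ S, ϑ ≤ That j ω} := by
  have hε : c₃ * n ^ (-κ) ∈ Set.Ioo (0 : ℝ) 1 := ⟨by positivity, hsmall⟩
  have hrate : c₂ * c₃ ^ 2 * n ^ (1 - 2 * κ) = c₂ * n * (c₃ * n ^ (-κ)) ^ 2 := by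
    rw [mul_assoc, ← mul_mul_rpow_neg_sq hn, mul_assoc]
  rw [hrate, ofReal_one_sub_natCast_mul _ (by positivity), ← measure_univ (μ := P)]
  exact measure_univ_sub_card_mul_le_measure_forall_threshold_le
    (fun j hj => hdev j hj _ hε) (fun j hj => by simpa only [mul_assoc] using hsig j hj) hϑ

end Screening

/-- Sure screening property of FuSIS. -/
theorem fusis_sure_screening {Ω : Type*} [MeasurableSpace Ω]
    (P : Measure Ω) [IsProbabilityMeasure P]
    (p h n : ℕ) (hh : 1 ≤ h) (hn : 0 < n)
    (γhat : ℕ → Ω → ℝ) (γ : ℕ → ℝ)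
    (S : Finset ℕ) (hS : ∀ j ∈ S, j ∈ Finset.Icc h (p - h))
    (Dhat : ℕ → Ω → ℝ)
    (hDhat : ∀ j ω, Dhat j ω =
      (1 / h : ℝ) * ∑ i ∈ Finset.Icc 1 h, |γhat (j - i + 1) ω - γhat (j + i) ω|)
    (D : ℕ → ℝ)
    (hD : ∀ j, D j = (1 / h : ℝ) * ∑ i ∈ Finset.Icc 1 h, |γ (j - i + 1) - γ (j + i)|)
    (c₁ c₂ c₃ : ℝ) (hc₁ : 0 < c₁) (hc₂ : 0 < c₂) (hc₃ : 0 < c₃)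
    (κ : ℝ) (hκ0 : 0 ≤ κ) (hκ1 : κ ≤ 1 / 2)
    -- (i) deviation inequality for the fused screening statistic
    (hdev : ∀ j ∈ S, ∀ ε : ℝ, ε ∈ Set.Ioo (0 : ℝ) 1 →
      P {ω | ε ≤ |Dhat j ω - D j|} ≤
        ENNReal.ofReal (h * c₁ * Real.exp (-(c₂ * n * ε ^ 2))))
    -- (ii) minimum signal strength
    (hsig : ∀ j ∈ S, 2 * c₃ * (n : ℝ) ^ (-κ) ≤ D j)
    (hsmall : c₃ * (n : ℝ) ^ (-κ) < 1)
    (ϑ : ℝ) (hϑ0 : 0 < ϑ) (hϑ : ∀ j ∈ S, ϑ ≤ D j / 2) :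
    ENNReal.ofReal
        (1 - S.card * h * c₁ * Real.exp (-(c₂ * c₃ ^ 2 * (n : ℝ) ^ (1 - 2 * κ)))) ≤
      P {ω | ∀ j ∈ S, ϑ ≤ Dhat j ω} := by
  simpa only [mul_assoc] using fusis_sure_screening_general (C := h * c₁)
    (Nat.cast_pos.mpr hn) (by positivity) hc₃ hdev hsig hsmall hϑ
end

section
/- Deviation inequality for the fused screening statistic: fix j with h ≤ j ≤ p−h. Suppose there exist constants c₁′, c₂′ > 0 such that for every k ∈ {j−h+1,…,j+h} and every ε ∈ (0,1), P( |γ̂_k − γ_k| ≥ ε ) ≤ c₁′·exp(−c₂′ n ε²). Then for every ε ∈ (0,1), P( |D̂(j,h) − D(j,h)| ≥ ε ) ≤ 4 h c₁′ · exp( −(c₂′/4) n ε² ). -/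
open MeasureTheory Finset

/-!
By the triangle inequality, the `i`-th summand of the fused statistic moves by at most the sum of
the errors at `j - i + 1` and `j + i`. If the average moves by at least `ε`, then so does some
summand, hence one of the `2h` coordinates in the window is off by at least `ε / 2`. The halving
turns `c₂` into `c₂ / 4`, and the union bound over the window contributes the factor `2h`.
-/

section FusedDiff

variable {E : Type*} [PseudoMetricSpace E] {h j : ℕ}

/-- The fused screening statistic `D(j, h)` of a sequence `x`: the average of the distances between
the points of the window `j - h + 1, …, j + h` paired by reflection about `j + 1/2`. It is the
population quantity for `x = γ`, and the estimator `D̂(j, h)` when `x` holds the estimates of `γ`.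
Meaningful only for `1 ≤ h ≤ j`: for `h = 0` the division gives `0`, and for `j < h` the
subtraction `j - i` truncates. -/
noncomputable def fusedDiff (h j : ℕ) (x : ℕ → E) : ℝ :=
  (1 / h : ℝ) * ∑ i ∈ Icc 1 h, dist (x (j - i + 1)) (x (j + i))

lemma abs_fusedDiff_sub_fusedDiff_le (h j : ℕ) (x y : ℕ → E) :
    |fusedDiff h j x - fusedDiff h j y| ≤
      (1 / h : ℝ) * ∑ i ∈ Icc 1 h,
        (dist (x (j - i + 1)) (y (j - i + 1)) + dist (x (j + i)) (y (j + i))) := by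
  rw [fusedDiff, fusedDiff, ← mul_sub, ← sum_sub_distrib, abs_mul,
    abs_of_nonneg (by positivity : (0 : ℝ) ≤ 1 / h)]
  gcongr
  exact (abs_sum_le_sum_abs _ _).trans (sum_le_sum fun i _ ↦ dist_dist_dist_le _ _ _ _)

lemma exists_half_le_dist_of_le_abs_fusedDiff_sub (hh : 1 ≤ h) {x y : ℕ → E} {ε : ℝ}
    (hε : ε ≤ |fusedDiff h j x - fusedDiff h j y|) :
    ∃ k ∈ Icc (j - h + 1) (j + h), ε / 2 ≤ dist (x k) (y k) := by
  have hpos : (0 : ℝ) < h := by exact_mod_cast hh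
  have hsum : ∑ _i ∈ Icc 1 h, ε ≤ ∑ i ∈ Icc 1 h,
      (dist (x (j - i + 1)) (y (j - i + 1)) + dist (x (j + i)) (y (j + i))) := by
    have hle := hε.trans (abs_fusedDiff_sub_fusedDiff_le h j x y)
    rw [one_div_mul_eq_div, le_div_iff₀' hpos] at hle
    simpa using hle
  obtain ⟨i, hi, hpair⟩ := exists_le_of_sum_le (nonempty_Icc.2 hh) hsum
  rw [mem_Icc] at hi
  rcases le_total (ε / 2) (dist (x (j + i)) (y (j + i))) with hright | hright
  · exact ⟨j + i, mem_Icc.2 (by omega), hright⟩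
  · exact ⟨j - i + 1, mem_Icc.2 (by omega), by linarith⟩

variable {Ω : Type*} [MeasurableSpace Ω]

lemma measure_le_abs_fusedDiff_sub_le (μ : Measure Ω) (hh : 1 ≤ h) (hj : h ≤ j)
    {X : ℕ → Ω → E} {x : ℕ → E} {ε : ℝ} {δ : ENNReal}
    (hδ : ∀ k ∈ Icc (j - h + 1) (j + h), μ {ω | ε / 2 ≤ dist (X k ω) (x k)} ≤ δ) :
    μ {ω | ε ≤ |fusedDiff h j (X · ω) - fusedDiff h j x|} ≤ (2 * h : ℕ) * δ := by
  have hsub : {ω | ε ≤ |fusedDiff h j (X · ω) - fusedDiff h j x|} ⊆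
      ⋃ k ∈ Icc (j - h + 1) (j + h), {ω | ε / 2 ≤ dist (X k ω) (x k)} := fun ω hω ↦ by
    simpa only [Set.mem_iUnion₂, Set.mem_ofPred_eq, exists_prop] using
      exists_half_le_dist_of_le_abs_fusedDiff_sub hh hω
  have hcard : #(Icc (j - h + 1) (j + h)) = 2 * h := by
    rw [Nat.card_Icc]
    omega
  calc μ {ω | ε ≤ |fusedDiff h j (X · ω) - fusedDiff h j x|}
      ≤ ∑ k ∈ Icc (j - h + 1) (j + h), μ {ω | ε / 2 ≤ dist (X k ω) (x k)} :=
        (measure_mono hsub).trans (measure_biUnion_finset_le _ _)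
    _ ≤ #(Icc (j - h + 1) (j + h)) • δ := sum_le_card_nsmul _ _ _ hδ
    _ = (2 * h : ℕ) * δ := by rw [hcard, nsmul_eq_mul]

theorem fused_screening_deviation_general (μ : Measure Ω) {n : ℕ} (hh : 1 ≤ h) (hj : h ≤ j)
    (X : ℕ → Ω → E) (x : ℕ → E) {c₁ c₂ : ℝ}
    (hdev : ∀ k ∈ Icc (j - h + 1) (j + h), ∀ ε ∈ Set.Ioo (0 : ℝ) 1,
      μ {ω | ε ≤ dist (X k ω) (x k)} ≤ ENNReal.ofReal (c₁ * Real.exp (-(c₂ * n * ε ^ 2))))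
    {ε : ℝ} (hε : ε ∈ Set.Ioo (0 : ℝ) 1) :
    μ {ω | ε ≤ |fusedDiff h j (X · ω) - fusedDiff h j x|} ≤
      ENNReal.ofReal (2 * h * c₁ * Real.exp (-(c₂ / 4 * n * ε ^ 2))) := by
  have hhalf : ε / 2 ∈ Set.Ioo (0 : ℝ) 1 := ⟨half_pos hε.1, by linarith [hε.1, hε.2]⟩
  have hexp : c₂ * n * (ε / 2) ^ 2 = c₂ / 4 * n * ε ^ 2 := by ring
  calc μ {ω | ε ≤ |fusedDiff h j (X · ω) - fusedDiff h j x|}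
      ≤ (2 * h : ℕ) * ENNReal.ofReal (c₁ * Real.exp (-(c₂ * n * (ε / 2) ^ 2))) :=
        measure_le_abs_fusedDiff_sub_le μ hh hj fun k hk ↦ hdev k hk _ hhalf
    _ = ENNReal.ofReal (2 * h * c₁ * Real.exp (-(c₂ / 4 * n * ε ^ 2))) := by
        rw [hexp, ← nsmul_eq_mul, ← ENNReal.ofReal_nsmul, nsmul_eq_mul]
        push_cast
        rw [← mul_assoc]

end FusedDiff

/-- Deviation inequality for the fused screening statistic. -/
theorem fused_screening_deviation {Ω : Type*} [MeasurableSpace Ω]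
    (P : Measure Ω) [IsProbabilityMeasure P]
    (p h n j : ℕ) (hh : 1 ≤ h) (hn : 0 < n) (hj1 : h ≤ j) (hj2 : j ≤ p - h)
    (γhat : ℕ → Ω → ℝ) (γ : ℕ → ℝ)
    (c₁' c₂' : ℝ) (hc₁ : 0 < c₁') (hc₂ : 0 < c₂')
    (hdev : ∀ k ∈ Finset.Icc (j - h + 1) (j + h), ∀ ε : ℝ, ε ∈ Set.Ioo (0 : ℝ) 1 →
      P {ω | ε ≤ |γhat k ω - γ k|} ≤ ENNReal.ofReal (c₁' * Real.exp (-(c₂' * n * ε ^ 2))))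
    (ε : ℝ) (hε : ε ∈ Set.Ioo (0 : ℝ) 1) :
    P {ω | ε ≤ (|((1 / h : ℝ) * ∑ i ∈ Finset.Icc 1 h, |γhat (j - i + 1) ω - γhat (j + i) ω|) -
              ((1 / h : ℝ) * ∑ i ∈ Finset.Icc 1 h, |γ (j - i + 1) - γ (j + i)|)|)} ≤
      ENNReal.ofReal (4 * h * c₁' * Real.exp (-(c₂' / 4 * n * ε ^ 2))) := by
  have hle := fused_screening_deviation_general P hh hj1 γhat γ hdev hε
  exact hle.trans (ENNReal.ofReal_le_ofReal (by gcongr; norm_num))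
end

section
/- Deterministic ℓ₁ error bound for the Lasso: let A ∈ ℝ^{n×d}, let θ* ∈ ℝ^d have support S with |S| = s, let ε ∈ ℝⁿ, y = Aθ* + ε, and λ > 0. Assume ‖Aᵀε/n‖_∞ ≤ λ/2 and Λ_min(AᵀA/n) ≥ c₀ for some c₀ > 0. Then every minimizer θ̂ of L(θ) = (1/(2n))‖y − Aθ‖₂² + λ‖θ‖₁ satisfies, with δ = θ̂ − θ*: ‖δ_{S^c}‖₁ ≤ 3‖δ_S‖₁, ‖δ‖₂ ≤ 3λ√s/c₀, and ‖δ‖₁ ≤ 12 s λ / c₀. -/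
open Matrix Finset

/-- The Lasso objective `L(θ) = (1/(2n))‖y − Aθ‖₂² + λ‖θ‖₁`. -/
noncomputable def lassoLoss {n d : ℕ} (A : Matrix (Fin n) (Fin d) ℝ)
    (y : Fin n → ℝ) (lam : ℝ) (θ : Fin d → ℝ) : ℝ :=
  (1 / (2 * n)) * ∑ i, (y i - (A *ᵥ θ) i) ^ 2 + lam * ∑ j, |θ j|

/-!
Put `δ = θ̂ - θ*` and let `κλ` bound the noise level, with `κ = 1/2` in the classical statement.
Comparing the objective at `θ̂` and at `θ*` leaves `‖Aδ‖₂²/n` bounded by twice the noise term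
`⟨Aᵀε/n, δ⟩ ≤ κλ‖δ‖₁` plus `2λ(‖θ*‖₁ - ‖θ̂‖₁) ≤ 2λ(‖δ_S‖₁ - ‖δ_{Sᶜ}‖₁)`, that is,
`‖Aδ‖₂²/n ≤ 2λ((1 + κ)‖δ_S‖₁ - (1 - κ)‖δ_{Sᶜ}‖₁)`. The left side is nonnegative, so `δ` lies in
the cone `‖δ_{Sᶜ}‖₁ ≤ (1 + κ)/(1 - κ) ‖δ_S‖₁`. There the eigenvalue bound gives
`c₀‖δ‖₂² ≤ 2λ(1 + κ)‖δ_S‖₁ ≤ 2λ(1 + κ)√s‖δ‖₂`, while `‖δ‖₁ ≤ 2/(1 - κ) ‖δ_S‖₁ ≤ 2/(1 - κ) √s‖δ‖₂`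
turns the `ℓ₂` bound into the `ℓ₁` bound.
-/

section Vectors

variable {ι R : Type*} [Fintype ι]

theorem dotProduct_le_mul_sum_abs [Ring R] [LinearOrder R] [IsOrderedRing R]
    {u : ι → R} {c : R} (hu : ∀ i, |u i| ≤ c) (v : ι → R) :
    u ⬝ᵥ v ≤ c * ∑ i, |v i| := by
  rw [dotProduct, mul_sum]
  refine sum_le_sum fun i _ => ?_
  calc u i * v i ≤ |u i| * |v i| := (le_abs_self _).trans_eq (abs_mul _ _)
    _ ≤ c * |v i| := mul_le_mul_of_nonneg_right (hu i) (abs_nonneg _)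

theorem sum_abs_sub_sum_abs_le_of_support_subset [DecidableEq ι]
    [AddCommGroup R] [LinearOrder R] [IsOrderedAddMonoid R]
    {x : ι → R} {S : Finset ι} (hx : Function.support x ⊆ S) (y : ι → R) :
    ∑ i, |x i| - ∑ i, |y i| ≤ ∑ i ∈ S, |y i - x i| - ∑ i ∈ Sᶜ, |y i - x i| := by
  have on_S : ∑ i ∈ S, (|x i| - |y i|) ≤ ∑ i ∈ S, |y i - x i| :=
    sum_le_sum fun i _ => (abs_sub_abs_le_abs_sub _ _).trans_eq (abs_sub_comm _ _)
  have off_S : ∑ i ∈ Sᶜ, (|x i| - |y i|) = -∑ i ∈ Sᶜ, |y i - x i| := by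
    rw [← sum_neg_distrib]
    refine sum_congr rfl fun i hi => ?_
    have hxi : x i = 0 := Function.notMem_support.mp fun h => mem_compl.mp hi (hx h)
    simp [hxi]
  rw [← sum_sub_distrib, ← sum_add_sum_compl S, off_S, ← sub_eq_add_neg]
  exact sub_le_sub_right on_S _

theorem sum_abs_le_sqrt_card_mul_sqrt_sum_sq (S : Finset ι) (v : ι → ℝ) :
    ∑ i ∈ S, |v i| ≤ √(#S : ℝ) * √(∑ i, v i ^ 2) := by
  rw [← Real.sqrt_mul (Nat.cast_nonneg _)]
  apply Real.le_sqrt_of_sq_le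
  calc (∑ i ∈ S, |v i|) ^ 2 ≤ #S * ∑ i ∈ S, |v i| ^ 2 := sq_sum_le_card_mul_sum_sq
    _ = #S * ∑ i ∈ S, v i ^ 2 := by simp only [sq_abs]
    _ ≤ #S * ∑ i, v i ^ 2 := by
      gcongr
      exact subset_univ S

theorem sqrt_sum_sq_le_of_mul_sum_sq_le {S : Finset ι} {v : ι → ℝ} {c t : ℝ} (hc : 0 < c)
    (ht : 0 ≤ t) (h : c * ∑ i, v i ^ 2 ≤ t * ∑ i ∈ S, |v i|) :
    √(∑ i, v i ^ 2) ≤ t * √(#S : ℝ) / c := by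
  rw [le_div_iff₀ hc]
  rcases (Real.sqrt_nonneg (∑ i, v i ^ 2)).eq_or_lt with hzero | hpos
  · rw [← hzero, zero_mul]
    positivity
  · refine le_of_mul_le_mul_right ?_ hpos
    calc √(∑ i, v i ^ 2) * c * √(∑ i, v i ^ 2) = c * √(∑ i, v i ^ 2) ^ 2 := by ring
      _ = c * ∑ i, v i ^ 2 := by rw [Real.sq_sqrt (sum_nonneg fun i _ => sq_nonneg (v i))]
      _ ≤ t * ∑ i ∈ S, |v i| := h
      _ ≤ t * (√(#S : ℝ) * √(∑ i, v i ^ 2)) := by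
        gcongr
        exact sum_abs_le_sqrt_card_mul_sqrt_sum_sq S v
      _ = t * √(#S : ℝ) * √(∑ i, v i ^ 2) := by ring

/-- The cone of vectors with `‖v_{Sᶜ}‖₁ ≤ α‖v_S‖₁`, on which restricted eigenvalue conditions for
sparse regression are imposed. -/
def l1Cone [DecidableEq ι] (S : Finset ι) (α : ℝ) : Set (ι → ℝ) :=
  {v | ∑ i ∈ Sᶜ, |v i| ≤ α * ∑ i ∈ S, |v i|}

theorem sum_abs_le_of_mem_l1Cone [DecidableEq ι] {S : Finset ι} {α : ℝ} (hα : 0 ≤ 1 + α)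
    {v : ι → ℝ} (hv : v ∈ l1Cone S α) :
    ∑ i, |v i| ≤ (1 + α) * (√(#S : ℝ) * √(∑ i, v i ^ 2)) := by
  calc ∑ i, |v i| = ∑ i ∈ S, |v i| + ∑ i ∈ Sᶜ, |v i| := (sum_add_sum_compl S _).symm
    _ ≤ ∑ i ∈ S, |v i| + α * ∑ i ∈ S, |v i| := add_le_add_right hv _
    _ = (1 + α) * ∑ i ∈ S, |v i| := by ring
    _ ≤ (1 + α) * (√(#S : ℝ) * √(∑ i, v i ^ 2)) :=
      mul_le_mul_of_nonneg_left (sum_abs_le_sqrt_card_mul_sqrt_sum_sq S v) hα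

end Vectors

section LeastSquares

variable {m ι R : Type*} [Fintype m] [Fintype ι]

theorem dotProduct_transpose_mul_self_mulVec [CommSemiring R] (A : Matrix m ι R) (v : ι → R) :
    v ⬝ᵥ ((Aᵀ * A) *ᵥ v) = ∑ i, (A *ᵥ v) i ^ 2 := by
  rw [← mulVec_mulVec, dotProduct_transpose_mulVec]
  simp only [dotProduct, sq]

theorem sum_sq_residual [CommRing R] (A : Matrix m ι R) (x z : ι → R) (ε : m → R) :
    ∑ i, ((A *ᵥ x + ε) i - (A *ᵥ z) i) ^ 2 =
      ∑ i, ε i ^ 2 - 2 * ((Aᵀ *ᵥ ε) ⬝ᵥ (z - x)) + ∑ i, (A *ᵥ (z - x)) i ^ 2 := by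
  rw [mulVec_transpose, ← dotProduct_mulVec, dotProduct, mul_sum, ← sum_sub_distrib,
    ← sum_add_distrib]
  refine sum_congr rfl fun i _ => ?_
  rw [mulVec_sub, Pi.add_apply, Pi.sub_apply]
  ring

end LeastSquares

section Lasso

variable {n d : ℕ} {A : Matrix (Fin n) (Fin d) ℝ} {θstar θhat : Fin d → ℝ} {ε : Fin n → ℝ}
  {lam : ℝ}

theorem sum_sq_mulVec_sub_le_of_lassoLoss_le (hn : 0 < n)
    (hle : lassoLoss A (A *ᵥ θstar + ε) lam θhat ≤ lassoLoss A (A *ᵥ θstar + ε) lam θstar) :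
    ∑ i, (A *ᵥ (θhat - θstar)) i ^ 2 ≤
      2 * ((Aᵀ *ᵥ ε) ⬝ᵥ (θhat - θstar)) + 2 * n * lam * (∑ k, |θstar k| - ∑ k, |θhat k|) := by
  have : (0 : ℝ) < n := Nat.cast_pos.mpr hn
  have two_n_mul_loss (θ : Fin d → ℝ) : 2 * n * lassoLoss A (A *ᵥ θstar + ε) lam θ =
      ∑ i, ε i ^ 2 - 2 * ((Aᵀ *ᵥ ε) ⬝ᵥ (θ - θstar)) + ∑ i, (A *ᵥ (θ - θstar)) i ^ 2 +
        2 * n * lam * ∑ k, |θ k| := by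
    rw [lassoLoss, sum_sq_residual]
    field_simp
  have scaled := mul_le_mul_of_nonneg_left hle (by positivity : (0 : ℝ) ≤ 2 * n)
  rw [two_n_mul_loss, two_n_mul_loss, sub_self, dotProduct_zero, mulVec_zero] at scaled
  simp only [Pi.zero_apply, ne_eq, OfNat.ofNat_ne_zero, not_false_eq_true, zero_pow,
    sum_const_zero] at scaled
  linarith

theorem sum_sq_mulVec_sub_div_le_of_lassoLoss_le {S : Finset (Fin d)} {κ : ℝ} (hn : 0 < n)
    (hS : Function.support θstar ⊆ S) (hlam : 0 ≤ lam)
    (hnoise : ∀ j, |(Aᵀ *ᵥ ε) j / n| ≤ κ * lam)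
    (hle : lassoLoss A (A *ᵥ θstar + ε) lam θhat ≤ lassoLoss A (A *ᵥ θstar + ε) lam θstar) :
    (∑ i, (A *ᵥ (θhat - θstar)) i ^ 2) / n ≤
      2 * lam * ((1 + κ) * ∑ k ∈ S, |θhat k - θstar k| -
        (1 - κ) * ∑ k ∈ Sᶜ, |θhat k - θstar k|) := by
  have hn' : (0 : ℝ) < n := Nat.cast_pos.mpr hn
  have noise_le (j : Fin d) : |(Aᵀ *ᵥ ε) j| ≤ n * (κ * lam) := by
    have h := hnoise j
    rwa [abs_div, Nat.abs_cast, div_le_iff₀' hn'] at h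
  have cross : (Aᵀ *ᵥ ε) ⬝ᵥ (θhat - θstar) ≤
      n * (κ * lam) * (∑ k ∈ S, |θhat k - θstar k| + ∑ k ∈ Sᶜ, |θhat k - θstar k|) := by
    rw [sum_add_sum_compl]
    exact dotProduct_le_mul_sum_abs noise_le _
  have penalty := mul_le_mul_of_nonneg_left (sum_abs_sub_sum_abs_le_of_support_subset hS θhat)
    (by positivity : 0 ≤ 2 * n * lam)
  rw [div_le_iff₀' hn']
  linarith [sum_sq_mulVec_sub_le_of_lassoLoss_le hn hle]

theorem sub_mem_l1Cone_of_lassoLoss_le {S : Finset (Fin d)} {κ : ℝ} (hn : 0 < n)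
    (hS : Function.support θstar ⊆ S) (hlam : 0 < lam) (hκ : κ < 1)
    (hnoise : ∀ j, |(Aᵀ *ᵥ ε) j / n| ≤ κ * lam)
    (hle : lassoLoss A (A *ᵥ θstar + ε) lam θhat ≤ lassoLoss A (A *ᵥ θstar + ε) lam θstar) :
    θhat - θstar ∈ l1Cone S ((1 + κ) / (1 - κ)) := by
  have energy_nonneg : 0 ≤ (∑ i, (A *ᵥ (θhat - θstar)) i ^ 2) / n := by positivity
  have gap_nonneg := nonneg_of_mul_nonneg_right
    (energy_nonneg.trans (sum_sq_mulVec_sub_div_le_of_lassoLoss_le hn hS hlam.le hnoise hle))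
    (by positivity : 0 < 2 * lam)
  change ∑ k ∈ Sᶜ, |θhat k - θstar k| ≤ (1 + κ) / (1 - κ) * ∑ k ∈ S, |θhat k - θstar k|
  rw [div_mul_eq_mul_div, le_div_iff₀' (sub_pos.mpr hκ)]
  exact sub_nonneg.mp gap_nonneg

theorem lasso_l1_error_bound_general {S : Finset (Fin d)} {κ c₀ : ℝ} (hn : 0 < n)
    (hS : Function.support θstar ⊆ S) (hlam : 0 < lam) (hκ₀ : 0 ≤ κ) (hκ₁ : κ < 1)
    (hnoise : ∀ j, |(Aᵀ *ᵥ ε) j / n| ≤ κ * lam) (hc₀ : 0 < c₀)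
    (heig : ∀ v ∈ l1Cone S ((1 + κ) / (1 - κ)),
      c₀ * ∑ k, v k ^ 2 ≤ (v ⬝ᵥ ((Aᵀ * A) *ᵥ v)) / n)
    (hle : lassoLoss A (A *ᵥ θstar + ε) lam θhat ≤ lassoLoss A (A *ᵥ θstar + ε) lam θstar) :
    (∑ k ∈ Sᶜ, |θhat k - θstar k|) ≤ (1 + κ) / (1 - κ) * ∑ k ∈ S, |θhat k - θstar k| ∧
      √(∑ k, (θhat k - θstar k) ^ 2) ≤ 2 * (1 + κ) * lam * √(#S : ℝ) / c₀ ∧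
      (∑ k, |θhat k - θstar k|) ≤ 4 * ((1 + κ) / (1 - κ)) * #S * lam / c₀ := by
  have hκ : 0 < 1 - κ := sub_pos.mpr hκ₁
  have cone := sub_mem_l1Cone_of_lassoLoss_le hn hS hlam hκ₁ hnoise hle
  have l2_bound : √(∑ k, (θhat k - θstar k) ^ 2) ≤ 2 * (1 + κ) * lam * √(#S : ℝ) / c₀ := by
    refine sqrt_sum_sq_le_of_mul_sum_sq_le hc₀ (by positivity) ?_
    have off_S_nonneg : 0 ≤ 2 * lam * ((1 - κ) * ∑ k ∈ Sᶜ, |θhat k - θstar k|) := by positivity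
    have curvature := heig _ cone
    rw [dotProduct_transpose_mul_self_mulVec] at curvature
    simp only [Pi.sub_apply] at curvature
    linarith [sum_sq_mulVec_sub_div_le_of_lassoLoss_le hn hS hlam.le hnoise hle]
  refine ⟨cone, l2_bound, ?_⟩
  calc ∑ k, |θhat k - θstar k|
      ≤ (1 + (1 + κ) / (1 - κ)) * (√(#S : ℝ) * √(∑ k, (θhat k - θstar k) ^ 2)) :=
        sum_abs_le_of_mem_l1Cone (by positivity) cone
    _ ≤ (1 + (1 + κ) / (1 - κ)) * (√(#S : ℝ) * (2 * (1 + κ) * lam * √(#S : ℝ) / c₀)) := by gcongr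
    _ = 4 * ((1 + κ) / (1 - κ)) * √(#S : ℝ) ^ 2 * lam / c₀ := by
      field_simp
      ring
    _ = 4 * ((1 + κ) / (1 - κ)) * #S * lam / c₀ := by rw [Real.sq_sqrt (Nat.cast_nonneg _)]

end Lasso

/-- Deterministic ℓ₁ error bound for the Lasso. -/
theorem lasso_l1_error_bound {n d : ℕ} (hn : 0 < n)
    (A : Matrix (Fin n) (Fin d) ℝ)
    (θstar : Fin d → ℝ)
    (S : Finset (Fin d)) (hS : ∀ k, k ∈ S ↔ θstar k ≠ 0)
    (ε : Fin n → ℝ) (y : Fin n → ℝ) (hy : y = A *ᵥ θstar + ε)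
    (lam : ℝ) (hlam : 0 < lam)
    -- ‖Aᵀε/n‖_∞ ≤ λ/2
    (hnoise : ∀ j, |(Aᵀ *ᵥ ε) j / n| ≤ lam / 2)
    -- Λ_min(AᵀA/n) ≥ c₀
    (c₀ : ℝ) (hc₀ : 0 < c₀)
    (heig : ∀ v : Fin d → ℝ, c₀ * ∑ k, (v k) ^ 2 ≤ (v ⬝ᵥ ((Aᵀ * A) *ᵥ v)) / n)
    (θhat : Fin d → ℝ)
    (hmin : ∀ θ, lassoLoss A y lam θhat ≤ lassoLoss A y lam θ) :
    (∑ k ∈ Sᶜ, |θhat k - θstar k|) ≤ 3 * ∑ k ∈ S, |θhat k - θstar k| ∧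
      Real.sqrt (∑ k, (θhat k - θstar k) ^ 2) ≤ 3 * lam * Real.sqrt S.card / c₀ ∧
      (∑ k, |θhat k - θstar k|) ≤ 12 * S.card * lam / c₀ := by
  convert lasso_l1_error_bound_general (κ := 1 / 2) hn (fun k => (hS k).2) hlam (by norm_num)
    (by norm_num) (fun j => (hnoise j).trans_eq (by ring)) hc₀ (fun v _ => heig v)
    (hy ▸ hmin θstar) using 5 <;> norm_num
end
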